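/- Let A be a Hopf algebra over a field k with comultiplication Δ, counit ε and antipode S, and let Φ ∈ A⊗A⊗A be an invertible element satisfying: (id⊗ε⊗id)(Φ) = 1⊗1; (Δ⊗id)(Δ(a)) = Φ·(id⊗Δ)(Δ(a))·Φ^{-1} for all a ∈ A; and the 3-cocycle identity (Δ⊗id⊗id)(Φ)·(id⊗id⊗Δ)(Φ) = (Φ⊗1)·(id⊗Δ⊗id)(Φ)·(1⊗Φ). Define γ = Σ S(Φ')·Φ''·S(Φ'''), where Φ = Σ Φ'⊗Φ''⊗Φ'''. Then γ = Σ \barΦ'·S(\barΦ'')·\barΦ''', where Φ^{-1} = Σ \barΦ'⊗\barΦ''⊗\barΦ''', and γ is a central element of A. -/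

import Mathlib

open TensorProduct

set_option maxHeartbeats 1000000
set_option synthInstance.maxHeartbeats 400000

noncomputable section

/-- Generators of the restricted quantum group `Q = \bar U_i sl(2)`. -/
inductive QGen : Type
  | E | F | K | Kinv
deriving DecidableEq

/-- The free algebra on the generators. -/
abbrev FA : Type := FreeAlgebra ℂ QGen

def ιE : FA := FreeAlgebra.ι ℂ QGen.E
def ιF : FA := FreeAlgebra.ι ℂ QGen.F
def ιK : FA := FreeAlgebra.ι ℂ QGen.K
def ιKi : FA := FreeAlgebra.ι ℂ QGen.Kinv

/-- Defining relations of `\bar U_i sl(2)` (at `q = i`, i.e. `p = 2`). -/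
inductive QRel : FA → FA → Prop
  | KKi : QRel (ιK * ιKi) 1
  | KiK : QRel (ιKi * ιK) 1
  | KEKi : QRel (ιK * ιE * ιKi) (-ιE)
  | KFKi : QRel (ιK * ιF * ιKi) (-ιF)
  | EF : QRel (ιE * ιF - ιF * ιE) ((2 * Complex.I)⁻¹ • (ιK - ιKi))
  | Esq : QRel (ιE ^ 2) 0
  | Fsq : QRel (ιF ^ 2) 0
  | K4 : QRel (ιK ^ 4) 1

/-- The restricted quantum group `\bar U_i sl(2)`: the quotient of the free algebra
by the two-sided ideal generated by the defining relations. -/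
abbrev Q : Type := RingQuot QRel

def gE : Q := RingQuot.mkAlgHom ℂ QRel ιE
def gF : Q := RingQuot.mkAlgHom ℂ QRel ιF
def gK : Q := RingQuot.mkAlgHom ℂ QRel ιK
def gKi : Q := RingQuot.mkAlgHom ℂ QRel ιKi

section Gadgets

variable (k : Type) [Field k] (A : Type) [Ring A] [Algebra k A]

abbrev TP2 : Type := A ⊗[k] A
abbrev TP3 : Type := A ⊗[k] (A ⊗[k] A)
abbrev TP4 : Type := A ⊗[k] (A ⊗[k] (A ⊗[k] A))

/-- Multiplication `a ⊗ b ↦ a * b`. -/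
def mulA : TP2 k A →ₗ[k] A := LinearMap.mul' k A

/-- Tensor flip `a ⊗ b ↦ b ⊗ a`. -/
def flipA : TP2 k A →ₗ[k] TP2 k A := (TensorProduct.comm k A A).toLinearMap

/-- `a ↦ a ⊗ 1`. -/
def lTen : A →ₗ[k] TP2 k A := (TensorProduct.mk k A A).flip 1

/-- `a ↦ 1 ⊗ a`. -/
def rTen : A →ₗ[k] TP2 k A := TensorProduct.mk k A A 1

/-- `a ⊗ b ↦ a ⊗ b ⊗ 1`. -/
def emb12 : TP2 k A →ₗ[k] TP3 k A := TensorProduct.map LinearMap.id (lTen k A)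

/-- `a ⊗ b ↦ a ⊗ 1 ⊗ b`. -/
def emb13 : TP2 k A →ₗ[k] TP3 k A := TensorProduct.map LinearMap.id (rTen k A)

/-- `a ⊗ b ↦ 1 ⊗ a ⊗ b`. -/
def emb23 : TP2 k A →ₗ[k] TP3 k A := TensorProduct.mk k A (TP2 k A) 1

/-- `a ⊗ b ⊗ c ↦ a ⊗ c ⊗ b`. -/
def perm132 : TP3 k A →ₗ[k] TP3 k A := TensorProduct.map LinearMap.id (flipA k A)

/-- `a ⊗ b ⊗ c ↦ b ⊗ c ⊗ a`. -/
def perm231 : TP3 k A →ₗ[k] TP3 k A :=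
  (TensorProduct.assoc k A A A).toLinearMap ∘ₗ (TensorProduct.comm k A (TP2 k A)).toLinearMap

/-- `a ⊗ b ⊗ c ↦ c ⊗ a ⊗ b`. -/
def perm312 : TP3 k A →ₗ[k] TP3 k A :=
  (TensorProduct.comm k (TP2 k A) A).toLinearMap ∘ₗ (TensorProduct.assoc k A A A).symm.toLinearMap

/-- `a ⊗ b ⊗ c ↦ b ⊗ a ⊗ c`. -/
def perm213 : TP3 k A →ₗ[k] TP3 k A :=
  (TensorProduct.assoc k A A A).toLinearMap ∘ₗ
    (TensorProduct.map (flipA k A) LinearMap.id) ∘ₗ (TensorProduct.assoc k A A A).symm.toLinearMap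

variable {k A}

/-- `(Δ ⊗ id)` on two tensor factors, landing in the triple tensor product. -/
def copL (D : A →ₐ[k] TP2 k A) : TP2 k A →ₗ[k] TP3 k A :=
  (TensorProduct.assoc k A A A).toLinearMap ∘ₗ TensorProduct.map D.toLinearMap LinearMap.id

/-- `(id ⊗ Δ)` on two tensor factors. -/
def copR (D : A →ₐ[k] TP2 k A) : TP2 k A →ₗ[k] TP3 k A :=
  TensorProduct.map LinearMap.id D.toLinearMap

/-- `(ε ⊗ id) : A ⊗ A → A`. -/
def cuL (ce : A →ₐ[k] k) : TP2 k A →ₗ[k] A :=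
  (TensorProduct.lid k A).toLinearMap ∘ₗ TensorProduct.map ce.toLinearMap LinearMap.id

/-- `(id ⊗ ε) : A ⊗ A → A`. -/
def cuR (ce : A →ₐ[k] k) : TP2 k A →ₗ[k] A :=
  (TensorProduct.rid k A).toLinearMap ∘ₗ TensorProduct.map LinearMap.id ce.toLinearMap

/-- `(id ⊗ ε ⊗ id) : A ⊗ A ⊗ A → A ⊗ A`. -/
def cuMid (ce : A →ₐ[k] k) : TP3 k A →ₗ[k] TP2 k A :=
  TensorProduct.map LinearMap.id (cuL ce)

/-- `(Δ ⊗ id ⊗ id)`. -/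
def cop4_1 (D : A →ₐ[k] TP2 k A) : TP3 k A →ₗ[k] TP4 k A :=
  (TensorProduct.assoc k A A (TP2 k A)).toLinearMap ∘ₗ TensorProduct.map D.toLinearMap LinearMap.id

/-- `(id ⊗ Δ ⊗ id)`. -/
def cop4_2 (D : A →ₐ[k] TP2 k A) : TP3 k A →ₗ[k] TP4 k A :=
  TensorProduct.map LinearMap.id (copL D)

/-- `(id ⊗ id ⊗ Δ)`. -/
def cop4_3 (D : A →ₐ[k] TP2 k A) : TP3 k A →ₗ[k] TP4 k A :=
  TensorProduct.map LinearMap.id (copR D)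

/-- `a ⊗ b ⊗ c ↦ a ⊗ b ⊗ c ⊗ 1`, i.e. `Φ ↦ Φ ⊗ 1`. -/
def pad4 : TP3 k A →ₗ[k] TP4 k A :=
  TensorProduct.map LinearMap.id (TensorProduct.map LinearMap.id (lTen k A))

/-- `a ⊗ b ⊗ c ↦ f(a) * g(b) * h(c)`. -/
def tmap3 (f g h : A →ₗ[k] A) : TP3 k A →ₗ[k] A :=
  mulA k A ∘ₗ TensorProduct.map f (mulA k A ∘ₗ TensorProduct.map g h)

/-- `a ⊗ b ↦ S(a) * b`, used in the antipode axiom `m ∘ (S ⊗ id) ∘ Δ = 1·ε`. -/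
def antipL (s : A →ₗ[k] A) : TP2 k A →ₗ[k] A := mulA k A ∘ₗ TensorProduct.map s LinearMap.id

/-- `a ⊗ b ↦ a * S(b)`. -/
def antipR (s : A →ₗ[k] A) : TP2 k A →ₗ[k] A := mulA k A ∘ₗ TensorProduct.map LinearMap.id s

end Gadgets

/-- Central idempotent `e₀ = (1 + K²)/2`. -/
def e0 : Q := (2:ℂ)⁻¹ • (1 + gK ^ 2)

/-- Central idempotent `e₁ = (1 − K²)/2`. -/
def e1 : Q := (2:ℂ)⁻¹ • (1 - gK ^ 2)

/-- `f⁺ = −i F`. -/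
def fp : Q := (-Complex.I) • gF

/-- `f⁻ = E K⁻¹`. -/
def fm : Q := gE * gKi

/-- The Casimir element `C = FE − (i/4)(K − K⁻¹)`. -/
def Cas : Q := gF * gE - (Complex.I / 4) • (gK - gKi)

def t2 (a b : Q) : TP2 ℂ Q := a ⊗ₜ[ℂ] b

def t3 (a b c : Q) : TP3 ℂ Q := a ⊗ₜ[ℂ] (b ⊗ₜ[ℂ] c)

def eEF : Q := gE * gF
def eEK : Q := gE * gK
def eFK : Q := gF * gK
def eEFK : Q := gE * gF * gK

/-- `Φ^{010}` component of the coassociator. -/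
def Phi010 : TP3 ℂ Q :=
  t3 1 1 1 - (1 + Complex.I) • t3 gE gK gF + (1 - Complex.I) • t3 eFK gK eEK
    + (2:ℂ) • t3 eEFK 1 eEFK

/-- `Φ^{101}` component of the coassociator. -/
def Phi101 : TP3 ℂ Q :=
  (Complex.I - 1) • t3 1 gF eEK + t3 1 gK 1 + (2:ℂ) • t3 1 eEF eEFK
    - (1 + Complex.I) • t3 1 eEK gF - (1 + Complex.I) • t3 gE eFK 1
    + (2 * Complex.I) • t3 gE eEFK gF + (1 - Complex.I) • t3 eFK gE 1
    - (2 * Complex.I) • t3 eFK eEFK eEK - (2:ℂ) • t3 eEFK eEF 1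

/-- `Φ^{111}` component of the coassociator. -/
def Phi111 (β : ℂ) : TP3 ℂ Q :=
  (Complex.I * β ^ 2) • (
    (1 + Complex.I) • t3 1 gF eEK - t3 1 gK 1 - (2:ℂ) • t3 1 eEF 1
      - (2 * Complex.I) • t3 1 eEF eEFK + (1 + Complex.I) • t3 1 eEK gF
      - (1 + Complex.I) • t3 gE 1 gF + (1 + Complex.I) • t3 gE eFK 1
      + (2 * Complex.I) • t3 gE eFK eEFK + (2:ℂ) • t3 gE eEFK gF
      - (1 + Complex.I) • t3 eFK 1 eEK + (1 + Complex.I) • t3 eFK gE 1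
      + (2 * Complex.I) • t3 eFK gE eEFK + (2:ℂ) • t3 eFK eEFK eEK
      + (2 * Complex.I) • t3 eEFK gF eEK + (2 * Complex.I) • t3 eEFK gK eEFK
      - (2 * Complex.I) • t3 eEFK eEF 1 + (2 * Complex.I) • t3 eEFK eEK gF
      + (4:ℂ) • t3 eEFK eEF eEFK)

/-- The coassociator `Φ` of the quasi-Hopf algebra structure on `Q`. -/
def Phi (β : ℂ) : TP3 ℂ Q :=
  t3 e0 e0 e0 + t3 e1 e0 e0 + Phi010 * t3 e0 e1 e0 + t3 e0 e0 e1
    + t3 e1 e1 e0 + Phi101 * t3 e1 e0 e1 + t3 e0 e1 e1 + Phi111 β * t3 e1 e1 e1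

def R00 : TP2 ℂ Q :=
  (2:ℂ)⁻¹ • ((t2 1 1 + t2 1 gK + t2 gK 1 - t2 gK gK) * (t2 1 1 + (2 * Complex.I) • t2 gE gF))

def R01 : TP2 ℂ Q :=
  (2:ℂ)⁻¹ • ((t2 1 1 - Complex.I • t2 1 gK + t2 gK 1 + Complex.I • t2 gK gK) *
    (t2 1 1 + (1 - Complex.I) • t2 eFK eEK - (1 - Complex.I) • t2 gE gF
      + (1 + Complex.I) • t2 eEFK 1 + (2 * Complex.I) • t2 eEFK eEFK))

def R10 : TP2 ℂ Q :=
  (2:ℂ)⁻¹ • ((t2 1 1 + t2 1 gK - Complex.I • t2 gK 1 + Complex.I • t2 gK gK) *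
    (t2 1 gK + (1 - Complex.I) • t2 eFK gE + (1 - Complex.I) • t2 gE eFK
      - (1 - Complex.I) • t2 1 eEF - (2 * Complex.I) • t2 eEFK eEF))

def R11 (β : ℂ) : TP2 ℂ Q :=
  (β / 2) • ((t2 1 1 - Complex.I • t2 1 gK - Complex.I • t2 gK 1 + t2 gK gK) *
    ((-Complex.I) • t2 gK 1 + (2 * Complex.I) • t2 eEK gF + (1 - Complex.I) • t2 gK eEFK
      - (1 + Complex.I) • t2 eEF 1 - (2 * Complex.I) • t2 eEF eEFK))

/-- The universal R-matrix `R` of the quasi-triangular quasi-Hopf structure on `Q`. -/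
def Rmat (β : ℂ) : TP2 ℂ Q :=
  R00 * t2 e0 e0 + R01 * t2 e0 e1 + R10 * t2 e1 e0 + R11 β * t2 e1 e1

/-- The standard R-matrix `R_st` of the quotient `Q/(K²-1)`. -/
def Rst : TP2 ℂ Q :=
  (2:ℂ)⁻¹ • ∑ m ∈ Finset.range 2, ∑ n ∈ Finset.range 2,
    ((-1:ℂ) ^ (m * n)) • (t2 (gK ^ m) (gK ^ n) * (t2 1 1 + (2 * Complex.I) • t2 gE gF))

/-- The monodromy matrix `M = R₂₁ · R`. -/
def Mmat (β : ℂ) : TP2 ℂ Q := flipA ℂ Q (Rmat β) * Rmat β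

/-- The ribbon element `v = (e₀ − iβ K e₁)(1 − 2 f⁺ f⁻)`. -/
def vRib (β : ℂ) : Q := (e0 - (Complex.I * β) • (gK * e1)) * (1 - (2:ℂ) • (fp * fm))

/-- The coevaluation element `β = e₀ − 2iβ² C e₁`. -/
def bbEl (β : ℂ) : Q := e0 - (2 * Complex.I * β ^ 2) • (Cas * e1)

/-- `b ⊗ c ↦ S(b · bb · S(c))`, inner part of the Drinfeld element. -/
def uInner (S : Q →ₗ[ℂ] Q) (bb : Q) : TP2 ℂ Q →ₗ[ℂ] Q :=
  S ∘ₗ mulA ℂ Q ∘ₗ TensorProduct.map (LinearMap.mulRight ℂ bb) S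

/-- `Φ' ⊗ Φ'' ⊗ Φ''' ↦ S(Φ'' · bb · S(Φ''')) ⊗ Φ'`. -/
def uMap1 (S : Q →ₗ[ℂ] Q) (bb : Q) : TP3 ℂ Q →ₗ[ℂ] TP2 ℂ Q :=
  TensorProduct.map (uInner S bb) LinearMap.id ∘ₗ (TensorProduct.comm ℂ Q (TP2 ℂ Q)).toLinearMap

/-- `R' ⊗ R'' ↦ S(R'') · al · R'`. -/
def uMap2 (S : Q →ₗ[ℂ] Q) (al : Q) : TP2 ℂ Q →ₗ[ℂ] Q :=
  mulA ℂ Q ∘ₗ TensorProduct.map (LinearMap.mulRight ℂ al ∘ₗ S) LinearMap.id ∘ₗ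
    (TensorProduct.comm ℂ Q Q).toLinearMap

/-- `(x ⊗ a) ⊗ (R' ⊗ R'') ↦ x · (S(R'') · al · R') · a`. -/
def uBig (S : Q →ₗ[ℂ] Q) (al : Q) : TP2 ℂ Q ⊗[ℂ] TP2 ℂ Q →ₗ[ℂ] Q :=
  mulA ℂ Q ∘ₗ TensorProduct.map LinearMap.id (mulA ℂ Q ∘ₗ (TensorProduct.comm ℂ Q Q).toLinearMap)
    ∘ₗ (TensorProduct.assoc ℂ Q Q Q).toLinearMap ∘ₗ TensorProduct.map LinearMap.id (uMap2 S al)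

/-- The Drinfeld element `u = Σ S(Φ''·b·S(Φ'''))·S(R'')·α·R'·Φ'` (with `α = 1`). -/
def uDrin (β : ℂ) (S : Q →ₗ[ℂ] Q) : Q :=
  uBig S 1 (uMap1 S (bbEl β) (Phi β) ⊗ₜ[ℂ] Rmat β)

/-- The balancing element `g = b · S(α) · v⁻¹ · u` (with `α = 1`). -/
def balG (β : ℂ) (S : Q →ₗ[ℂ] Q) : Q :=
  bbEl β * S 1 * Ring.inverse (vRib β) * uDrin β S

/-- The cointegral `c = (β²/i)·E·F·(1 + K + K² + K³)`. -/
def cInt (β : ℂ) : Q := (β ^ 2 / Complex.I) • (gE * gF * (1 + gK + gK ^ 2 + gK ^ 3))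

/-- The q-trace of a one-dimensional representation, with balancing element `K⁻¹`. -/
def qTr1 (ρ : Q →ₐ[ℂ] ℂ) : Q →ₗ[ℂ] ℂ := ρ.toLinearMap ∘ₗ LinearMap.mulLeft ℂ gK

/-- The q-trace of a two-dimensional (matrix) representation, with balancing element `K⁻¹`. -/
def qTrM (ρ : Q →ₐ[ℂ] Matrix (Fin 2) (Fin 2) ℂ) : Q →ₗ[ℂ] ℂ :=
  Matrix.traceLinearMap (Fin 2) ℂ ℂ ∘ₗ ρ.toLinearMap ∘ₗ LinearMap.mulLeft ℂ gK

/-- The Drinfeld mapping `φ ↦ (φ ⊗ id)(M)`. -/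
def drinfeldImg (β : ℂ) (φ : Q →ₗ[ℂ] ℂ) : Q :=
  (TensorProduct.lid ℂ Q) (TensorProduct.map φ LinearMap.id (Mmat β))

set_option linter.unusedSimpArgs false

section Helpers

variable {k : Type} [Field k] {A : Type} [Ring A] [Algebra k A]

/-- The antipode is unital and antimultiplicative. -/
theorem hp_antip (Δ : A →ₐ[k] TP2 k A) (ce : A →ₐ[k] k)
    (hco : ∀ a : A, copL Δ (Δ a) = copR Δ (Δ a))
    (hcuL : ∀ a : A, cuL ce (Δ a) = a) (hcuR : ∀ a : A, cuR ce (Δ a) = a)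
    (S : A →ₗ[k] A)
    (hSL : ∀ a : A, antipL S (Δ a) = ce a • (1:A))
    (hSR : ∀ a : A, antipR S (Δ a) = ce a • (1:A)) :
    S 1 = 1 ∧ ∀ a b : A, S (a * b) = S b * S a := by
  let B : Bialgebra k A := Bialgebra.ofAlgHom Δ ce
    (AlgHom.ext fun a => hco a)
    (AlgHom.ext fun a => (TensorProduct.lid k A).injective
      ((hcuL a).trans (by simp)))
    (AlgHom.ext fun a => (TensorProduct.rid k A).injective
      ((hcuR a).trans (by simp)))
  let H : HopfAlgebra k A :=
    { B with
      antipode := S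
      mul_antipode_rTensor_comul := LinearMap.ext fun a =>
        (hSL a).trans (Algebra.algebraMap_eq_smul_one _).symm
      mul_antipode_lTensor_comul := LinearMap.ext fun a =>
        (hSR a).trans (Algebra.algebraMap_eq_smul_one _).symm }
  exact ⟨HopfAlgebra.antipode_one (R := k) (A := A),
    fun a b => HopfAlgebra.antipode_mul_antidistrib (R := k) (A := A) a b⟩

/-- `a ⊗ b ⊗ c ⊗ d ↦ S(a) b S(c) d`. -/
def hp_m4 (S : A →ₗ[k] A) : TP4 k A →ₗ[k] A :=
  mulA k A ∘ₗ TensorProduct.map S (tmap3 LinearMap.id S LinearMap.id)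

/-- `ε ⊗ id` as an algebra map on `A ⊗ M`. -/
def hp_eps (ce : A →ₐ[k] k) (M : Type) [Ring M] [Algebra k M] : A ⊗[k] M →ₐ[k] M :=
  (Algebra.TensorProduct.lid k M).toAlgHom.comp (Algebra.TensorProduct.map ce (AlgHom.id k M))

/-- `id ⊗ ε`. -/
def hp_epsR (ce : A →ₐ[k] k) : TP2 k A →ₐ[k] A :=
  (Algebra.TensorProduct.rid k k A).toAlgHom.comp (Algebra.TensorProduct.map (AlgHom.id k A) ce)

/-- `id ⊗ f`. -/
def hp_idt {M N : Type} [Ring M] [Algebra k M] [Ring N] [Algebra k N] (f : M →ₐ[k] N) :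
    A ⊗[k] M →ₐ[k] A ⊗[k] N := Algebra.TensorProduct.map (AlgHom.id k A) f

@[simp] theorem hp_eps_tmul (ce : A →ₐ[k] k) (M : Type) [Ring M] [Algebra k M] (a : A) (m : M) :
    hp_eps ce M (a ⊗ₜ m) = ce a • m := by simp [hp_eps]

@[simp] theorem hp_epsR_tmul (ce : A →ₐ[k] k) (a m : A) :
    hp_epsR ce (a ⊗ₜ m) = ce m • a := by simp [hp_epsR]

@[simp] theorem hp_idt_tmul {M N : Type} [Ring M] [Algebra k M] [Ring N] [Algebra k N]
    (f : M →ₐ[k] N) (a : A) (m : M) :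
    hp_idt f (a ⊗ₜ[k] m) = a ⊗ₜ f m := by simp [hp_idt]

@[simp] theorem hp_m4_tmul (S : A →ₗ[k] A) (a b c d : A) :
    hp_m4 S (a ⊗ₜ (b ⊗ₜ (c ⊗ₜ d))) = S a * (b * (S c * d)) := by
  simp [hp_m4, tmap3, mulA]

@[simp] theorem hp_tmap3_tmul (f g h : A →ₗ[k] A) (a b c : A) :
    tmap3 f g h (a ⊗ₜ (b ⊗ₜ c)) = f a * (g b * h c) := by
  simp [tmap3, mulA]

@[simp] theorem hp_antipL_tmul (S : A →ₗ[k] A) (a b : A) :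
    antipL S (a ⊗ₜ b) = S a * b := by simp [antipL, mulA]
@[simp] theorem hp_antipR_tmul (S : A →ₗ[k] A) (a b : A) :
    antipR S (a ⊗ₜ b) = a * S b := by simp [antipR, mulA]
@[simp] theorem hp_cuL_tmul (ce : A →ₐ[k] k) (a b : A) :
    cuL ce (a ⊗ₜ b) = ce a • b := by simp [cuL]
@[simp] theorem hp_cuR_tmul (ce : A →ₐ[k] k) (a b : A) :
    cuR ce (a ⊗ₜ b) = ce b • a := by simp [cuR]
@[simp] theorem hp_cuMid_tmul (ce : A →ₐ[k] k) (a b c : A) :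
    cuMid ce (a ⊗ₜ (b ⊗ₜ c)) = a ⊗ₜ (ce b • c) := by simp [cuMid]
@[simp] theorem hp_copL_tmul (D : A →ₐ[k] TP2 k A) (a b : A) :
    copL D (a ⊗ₜ b) = TensorProduct.assoc k A A A (D a ⊗ₜ b) := by simp [copL]
@[simp] theorem hp_copR_tmul (D : A →ₐ[k] TP2 k A) (a b : A) :
    copR D (a ⊗ₜ b) = a ⊗ₜ D b := by simp [copR]
@[simp] theorem hp_cop1_tmul (D : A →ₐ[k] TP2 k A) (a : A) (t : TP2 k A) :
    cop4_1 D (a ⊗ₜ t) = TensorProduct.assoc k A A (TP2 k A) (D a ⊗ₜ t) := by simp [cop4_1]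
@[simp] theorem hp_cop2_tmul (D : A →ₐ[k] TP2 k A) (a : A) (t : TP2 k A) :
    cop4_2 D (a ⊗ₜ t) = a ⊗ₜ copL D t := by simp [cop4_2]
@[simp] theorem hp_cop3_tmul (D : A →ₐ[k] TP2 k A) (a : A) (t : TP2 k A) :
    cop4_3 D (a ⊗ₜ t) = a ⊗ₜ copR D t := by simp [cop4_3]
@[simp] theorem hp_pad_tmul (a b c : A) :
    pad4 (k := k) (a ⊗ₜ (b ⊗ₜ c)) = a ⊗ₜ (b ⊗ₜ (c ⊗ₜ 1)) := by simp [pad4, lTen]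

theorem hp_gen_mul_add {M : Type} [Ring M] [Algebra k M] (x y z : A ⊗[k] M) :
    x * (y + z) = x * y + x * z := mul_add x y z
theorem hp_gen_add_mul {M : Type} [Ring M] [Algebra k M] (x y z : A ⊗[k] M) :
    (x + y) * z = x * z + y * z := add_mul x y z
theorem hp_gen_mul_assoc {M : Type} [Ring M] [Algebra k M] (x y z : A ⊗[k] M) :
    x * y * z = x * (y * z) := mul_assoc x y z
theorem hp_gen_one_mul {M : Type} [Ring M] [Algebra k M] (x : A ⊗[k] M) :
    1 * x = x := one_mul x
theorem hp_gen_mul_one {M : Type} [Ring M] [Algebra k M] (x : A ⊗[k] M) :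
    x * 1 = x := mul_one x
theorem hp_mul_assoc4 (x y z : TP4 k A) : x * y * z = x * (y * z) := hp_gen_mul_assoc x y z
theorem hp_one_mul4 (x : TP4 k A) : 1 * x = x := hp_gen_one_mul x
theorem hp_mul_one4 (x : TP4 k A) : x * 1 = x := hp_gen_mul_one x
@[simp] theorem hp_mul_zero4 (x : TP4 k A) : x * 0 = 0 := mul_zero x
@[simp] theorem hp_zero_mul4 (x : TP4 k A) : 0 * x = 0 := zero_mul x
theorem hp_mul_add4 (x y z : TP4 k A) : x * (y + z) = x * y + x * z := hp_gen_mul_add x y z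
theorem hp_add_mul4 (x y z : TP4 k A) : (x + y) * z = x * z + y * z := hp_gen_add_mul x y z
@[simp] theorem hp_smul_mul4 (c : k) (x y : TP4 k A) : (c • x) * y = c • (x * y) :=
  smul_mul_assoc c x y

/-- Reduction to pure tensors. -/
theorem hp_ind3 {p : TP3 k A → Prop} (h0 : p 0) (hadd : ∀ x y, p x → p y → p (x + y))
    (ht : ∀ a b c : A, p (a ⊗ₜ (b ⊗ₜ c))) (X : TP3 k A) : p X := by
  induction X using TensorProduct.induction_on with
  | zero => exact h0
  | add x y hx hy => exact hadd x y hx hy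
  | tmul a t =>
    induction t using TensorProduct.induction_on with
    | zero => simpa using h0
    | add x y hx hy => rw [tmul_add]; exact hadd _ _ hx hy
    | tmul b c => exact ht a b c

theorem hp_ind4 {p : TP4 k A → Prop} (h0 : p 0) (hadd : ∀ x y, p x → p y → p (x + y))
    (ht : ∀ a b c d : A, p (a ⊗ₜ (b ⊗ₜ (c ⊗ₜ d)))) (X : TP4 k A) : p X := by
  induction X using TensorProduct.induction_on with
  | zero => exact h0
  | add x y hx hy => exact hadd x y hx hy
  | tmul a t =>
    induction t using hp_ind3 with
    | h0 => simpa using h0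
    | hadd x y hx hy => rw [tmul_add]; exact hadd _ _ hx hy
    | ht b c d => exact ht a b c d

/-! Counit on the second slot. -/

theorem hp_E2_1 (Δ : A →ₐ[k] TP2 k A) (ce : A →ₐ[k] k) (hcuR : ∀ a : A, cuR ce (Δ a) = a)
    (X : TP3 k A) : hp_idt (hp_eps ce (TP2 k A)) (cop4_1 Δ X) = X := by
  induction X using TensorProduct.induction_on with
  | zero => simp
  | add x y hx hy => simp only [map_add, hx, hy]
  | tmul a t =>
    have : ∀ W : TP2 k A, hp_idt (hp_eps ce (TP2 k A))
        (TensorProduct.assoc k A A (TP2 k A) (W ⊗ₜ t)) = cuR ce W ⊗ₜ t := by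
      intro W
      induction W using TensorProduct.induction_on with
      | zero => simp
      | add x y hx hy => simp only [add_tmul, map_add, hx, hy]
      | tmul b c => simp [smul_tmul]
    rw [hp_cop1_tmul, this, hcuR]

theorem hp_E2_2 (Δ : A →ₐ[k] TP2 k A) (ce : A →ₐ[k] k) (hcuL : ∀ a : A, cuL ce (Δ a) = a)
    (X : TP3 k A) : hp_idt (hp_eps ce (TP2 k A)) (cop4_2 Δ X) = X := by
  induction X using hp_ind3 with
  | h0 => simp
  | hadd x y hx hy => simp only [map_add, hx, hy]
  | ht a b c =>
    have : ∀ W : TP2 k A, hp_eps ce (TP2 k A)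
        (TensorProduct.assoc k A A A (W ⊗ₜ c)) = cuL ce W ⊗ₜ c := by
      intro W
      induction W using TensorProduct.induction_on with
      | zero => simp
      | add x y hx hy => simp only [add_tmul, map_add, hx, hy]
      | tmul b c => simp [smul_tmul']
    rw [hp_cop2_tmul, hp_idt_tmul, hp_copL_tmul, this, hcuL]

theorem hp_E2_3 (Δ : A →ₐ[k] TP2 k A) (ce : A →ₐ[k] k)
    (X : TP3 k A) : hp_idt (hp_eps ce (TP2 k A)) (cop4_3 Δ X) = copR Δ (cuMid ce X) := by
  induction X using hp_ind3 with
  | h0 => simp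
  | hadd x y hx hy => simp only [map_add, hx, hy]
  | ht a b c => simp

theorem hp_E2_p (ce : A →ₐ[k] k)
    (X : TP3 k A) : hp_idt (hp_eps ce (TP2 k A)) (pad4 X) = emb12 k A (cuMid ce X) := by
  induction X using hp_ind3 with
  | h0 => simp
  | hadd x y hx hy => simp only [map_add, hx, hy]
  | ht a b c => simp [emb12, lTen, ← smul_tmul']

/-! Counit on the third slot. -/

theorem hp_E3_1 (Δ : A →ₐ[k] TP2 k A) (ce : A →ₐ[k] k)
    (X : TP3 k A) : hp_idt (hp_idt (hp_eps ce A)) (cop4_1 Δ X) = copL Δ (cuMid ce X) := by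
  induction X using hp_ind3 with
  | h0 => simp
  | hadd x y hx hy => simp only [map_add, hx, hy]
  | ht a b c =>
    rw [hp_cop1_tmul, hp_cuMid_tmul, hp_copL_tmul]
    generalize Δ a = W
    induction W using TensorProduct.induction_on with
    | zero => simp
    | add x y hx hy => simp only [add_tmul, map_add, hx, hy]
    | tmul b c => simp

theorem hp_E3_2 (Δ : A →ₐ[k] TP2 k A) (ce : A →ₐ[k] k) (hcuR : ∀ a : A, cuR ce (Δ a) = a)
    (X : TP3 k A) : hp_idt (hp_idt (hp_eps ce A)) (cop4_2 Δ X) = X := by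
  induction X using hp_ind3 with
  | h0 => simp
  | hadd x y hx hy => simp only [map_add, hx, hy]
  | ht a b c =>
    have : ∀ W : TP2 k A, hp_idt (hp_eps ce A)
        (TensorProduct.assoc k A A A (W ⊗ₜ c)) = cuR ce W ⊗ₜ c := by
      intro W
      induction W using TensorProduct.induction_on with
      | zero => simp
      | add x y hx hy => simp only [add_tmul, map_add, hx, hy]
      | tmul b c => simp [smul_tmul]
    rw [hp_cop2_tmul, hp_idt_tmul, hp_copL_tmul, this, hcuR]

theorem hp_E3_3 (Δ : A →ₐ[k] TP2 k A) (ce : A →ₐ[k] k) (hcuL : ∀ a : A, cuL ce (Δ a) = a)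
    (X : TP3 k A) : hp_idt (hp_idt (hp_eps ce A)) (cop4_3 Δ X) = X := by
  induction X using hp_ind3 with
  | h0 => simp
  | hadd x y hx hy => simp only [map_add, hx, hy]
  | ht a b c =>
    have : ∀ W : TP2 k A, hp_eps ce A W = cuL ce W := by
      intro W
      induction W using TensorProduct.induction_on with
      | zero => simp
      | add x y hx hy => simp only [map_add, hx, hy]
      | tmul b c => simp
    simp [this, hcuL]

theorem hp_E3_p (ce : A →ₐ[k] k)
    (X : TP3 k A) : hp_idt (hp_idt (hp_eps ce A)) (pad4 X)
      = emb12 k A (hp_idt (hp_epsR ce) X) := by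
  induction X using hp_ind3 with
  | h0 => simp
  | hadd x y hx hy => simp only [map_add, hx, hy]
  | ht a b c => simp [emb12, lTen, ← smul_tmul']

theorem hp_E3_o (ce : A →ₐ[k] k)
    (X : TP3 k A) : hp_idt (hp_idt (hp_eps ce A)) ((1 : A) ⊗ₜ[k] X)
      = (1 : A) ⊗ₜ[k] cuMid ce X := by
  induction X using hp_ind3 with
  | h0 => simp
  | hadd x y hx hy => simp only [tmul_add, map_add, hx, hy]
  | ht a b c => simp

/-! The evaluation of the two sides of the cocycle identity. -/

theorem hp_L1 (Δ : A →ₐ[k] TP2 k A) (ce : A →ₐ[k] k) (S : A →ₗ[k] A)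
    (hSm : ∀ a b : A, S (a * b) = S b * S a)
    (hSR : ∀ a : A, antipR S (Δ a) = ce a • (1:A)) (X Y : TP3 k A) :
    hp_m4 S (pad4 X * cop4_2 Δ Y) =
      (mulA k A ∘ₗ TensorProduct.map S (LinearMap.mulLeft k (tmap3 S LinearMap.id S X)))
        (cuMid ce Y) := by
  induction Y using hp_ind3 with
  | h0 => simp
  | hadd x y hx hy => simp only [hp_mul_add4, hp_add_mul4, mul_add, map_add, hx, hy]
  | ht x y z =>
  induction X using hp_ind3 with
  | h0 => simp [mulA]
  | hadd u v hu hv =>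
    simp only [hp_mul_add4, hp_add_mul4, add_mul, map_add, hu, hv]
    simp [mulA, mul_add, add_mul]
  | ht p q r =>
    have : ∀ W : TP2 k A, hp_m4 S ((p ⊗ₜ (q ⊗ₜ (r ⊗ₜ 1))) *
        (x ⊗ₜ TensorProduct.assoc k A A A (W ⊗ₜ z)))
          = S x * S p * q * antipR S W * S r * z := by
      intro W
      induction W using TensorProduct.induction_on with
      | zero => simp
      | add u v hu hv => simp only [hp_mul_add4, hp_add_mul4, add_tmul, tmul_add, map_add, mul_add, hu, hv, add_mul]
      | tmul b c => simp [hSm, mul_assoc]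
    rw [hp_pad_tmul, hp_cop2_tmul, hp_copL_tmul, this, hSR]
    simp [mulA, mul_assoc]

theorem hp_L2 (Δ : A →ₐ[k] TP2 k A) (ce : A →ₐ[k] k) (S : A →ₗ[k] A)
    (hSm : ∀ a b : A, S (a * b) = S b * S a)
    (hSL : ∀ a : A, antipL S (Δ a) = ce a • (1:A)) (P : TP3 k A) (T : TP4 k A) :
    hp_m4 S (cop4_1 Δ P * T) =
      hp_m4 S (((1:A) ⊗ₜ[k] ((1:A) ⊗ₜ[k] hp_eps ce (TP2 k A) P)) * T) := by
  induction T using hp_ind4 with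
  | h0 => simp
  | hadd x y hx hy => simp only [hp_mul_add4, hp_add_mul4, mul_add, map_add, hx, hy]
  | ht a b c d =>
  induction P using hp_ind3 with
  | h0 => simp
  | hadd x y hx hy => simp only [hp_mul_add4, hp_add_mul4, add_mul, tmul_add, map_add, hx, hy]
  | ht p q r =>
    have : ∀ W : TP2 k A, hp_m4 S
        (TensorProduct.assoc k A A (TP2 k A) (W ⊗ₜ (q ⊗ₜ r)) * (a ⊗ₜ (b ⊗ₜ (c ⊗ₜ d))))
          = S a * antipL S W * b * S c * S q * r * d := by
      intro W
      induction W using TensorProduct.induction_on with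
      | zero => simp
      | add u v hu hv => simp only [hp_mul_add4, hp_add_mul4, add_tmul, map_add, mul_add, hu, hv, add_mul]
      | tmul b c => simp [hSm, mul_assoc]
    rw [hp_cop1_tmul, this, hSL]
    simp [hSm, mul_assoc]

theorem hp_L3 (Δ : A →ₐ[k] TP2 k A) (ce : A →ₐ[k] k) (S : A →ₗ[k] A)
    (hSm : ∀ a b : A, S (a * b) = S b * S a)
    (hSL : ∀ a : A, antipL S (Δ a) = ce a • (1:A)) (X R : TP3 k A) :
    hp_m4 S (cop4_3 Δ X * ((1:A) ⊗ₜ[k] R)) =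
      antipL S (hp_idt (hp_epsR ce) X) * tmap3 LinearMap.id S LinearMap.id R := by
  induction R using hp_ind3 with
  | h0 => simp
  | hadd x y hx hy => simp only [hp_mul_add4, hp_add_mul4, tmul_add, mul_add, map_add, hx, hy]
  | ht r s t =>
  induction X using hp_ind3 with
  | h0 => simp
  | hadd x y hx hy => simp only [hp_mul_add4, hp_add_mul4, add_mul, map_add, hx, hy]
  | ht x y z =>
    have : ∀ W : TP2 k A, hp_m4 S
        ((x ⊗ₜ[k] (y ⊗ₜ[k] W)) * ((1:A) ⊗ₜ (r ⊗ₜ (s ⊗ₜ t))))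
          = S x * y * r * S s * antipL S W * t := by
      intro W
      induction W using TensorProduct.induction_on with
      | zero => simp
      | add u v hu hv => simp only [hp_mul_add4, hp_add_mul4, tmul_add, map_add, mul_add, hu, hv, add_mul]
      | tmul b c => simp [hSm, mul_assoc]
    rw [hp_cop3_tmul, hp_copR_tmul, this, hSL]
    simp [mul_assoc]

/-! Centrality. -/

theorem hp_C1 (Δ : A →ₐ[k] TP2 k A) (ce : A →ₐ[k] k) (S : A →ₗ[k] A)
    (hSm : ∀ a b : A, S (a * b) = S b * S a)
    (hSR : ∀ a : A, antipR S (Δ a) = ce a • (1:A)) (X : TP3 k A) (w : TP2 k A) :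
    tmap3 LinearMap.id S LinearMap.id (X * copL Δ w) =
      tmap3 LinearMap.id S LinearMap.id X * cuL ce w := by
  induction w using TensorProduct.induction_on with
  | zero => simp
  | add x y hx hy => simp only [mul_add, map_add, hx, hy]
  | tmul x y =>
  induction X using hp_ind3 with
  | h0 => simp
  | hadd x y hx hy => simp only [add_mul, map_add, hx, hy]
  | ht p q r =>
    have : ∀ W : TP2 k A, tmap3 LinearMap.id S LinearMap.id
        ((p ⊗ₜ[k] (q ⊗ₜ[k] r)) * TensorProduct.assoc k A A A (W ⊗ₜ y))
          = p * antipR S W * S q * r * y := by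
      intro W
      induction W using TensorProduct.induction_on with
      | zero => simp
      | add u v hu hv => simp only [add_tmul, map_add, mul_add, hu, hv, add_mul]
      | tmul b c => simp [hSm, mul_assoc]
    rw [hp_copL_tmul, this, hSR]
    simp [mul_assoc]

theorem hp_C2 (Δ : A →ₐ[k] TP2 k A) (ce : A →ₐ[k] k) (S : A →ₗ[k] A)
    (hSm : ∀ a b : A, S (a * b) = S b * S a)
    (hSL : ∀ a : A, antipL S (Δ a) = ce a • (1:A)) (X : TP3 k A) (w : TP2 k A) :
    tmap3 LinearMap.id S LinearMap.id (copR Δ w * X) =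
      cuR ce w * tmap3 LinearMap.id S LinearMap.id X := by
  induction w using TensorProduct.induction_on with
  | zero => simp
  | add x y hx hy => simp only [add_mul, map_add, hx, hy]
  | tmul x y =>
  induction X using hp_ind3 with
  | h0 => simp
  | hadd x y hx hy => simp only [mul_add, map_add, hx, hy]
  | ht p q r =>
    have : ∀ W : TP2 k A, tmap3 LinearMap.id S LinearMap.id
        ((x ⊗ₜ[k] W) * (p ⊗ₜ[k] (q ⊗ₜ[k] r)))
          = x * p * S q * antipL S W * r := by
      intro W
      induction W using TensorProduct.induction_on with
      | zero => simp
      | add u v hu hv => simp only [tmul_add, map_add, mul_add, hu, hv, add_mul]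
      | tmul b c => simp [hSm, mul_assoc]
    rw [hp_copR_tmul, this, hSL]
    simp [mul_assoc]

end Helpers

/-- for a Hopf algebra `A` with a counital invertible 3-cocycle `Φ`
intertwining the iterated coproducts, the element `γ = Σ S(Φ')·Φ''·S(Φ''')` equals
`Σ \barΦ'·S(\barΦ'')·\barΦ'''` and is central. -/
theorem statement13 (k : Type) [Field k] (A : Type) [Ring A] [Algebra k A]
    (Δ : A →ₐ[k] TP2 k A) (ce : A →ₐ[k] k)
    (hco : ∀ a : A, copL Δ (Δ a) = copR Δ (Δ a))
    (hcuL : ∀ a : A, cuL ce (Δ a) = a) (hcuR : ∀ a : A, cuR ce (Δ a) = a)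
    (S : A →ₗ[k] A)
    (hSL : ∀ a : A, antipL S (Δ a) = ce a • (1:A))
    (hSR : ∀ a : A, antipR S (Δ a) = ce a • (1:A))
    (Φ : TP3 k A) (hΦ : IsUnit Φ) (hΦcu : cuMid ce Φ = 1)
    (hint : ∀ a : A, copL Δ (Δ a) = Φ * copR Δ (Δ a) * Ring.inverse Φ)
    (hcoc : cop4_1 Δ Φ * cop4_3 Δ Φ = pad4 Φ * cop4_2 Δ Φ * ((1:A) ⊗ₜ[k] Φ)) :
    tmap3 S LinearMap.id S Φ = tmap3 LinearMap.id S LinearMap.id (Ring.inverse Φ) ∧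
    ∀ a : A, tmap3 S LinearMap.id S Φ * a = a * tmap3 S LinearMap.id S Φ := by
  obtain ⟨hS1, hSm⟩ := hp_antip Δ ce hco hcuL hcuR S hSL hSR
  have hr : Φ * Ring.inverse Φ = 1 := Ring.mul_inverse_cancel _ hΦ
  have hl : Ring.inverse Φ * Φ = 1 := Ring.inverse_mul_cancel _ hΦ
  have one2 : (1 : TP2 k A) = 1 ⊗ₜ 1 := rfl
  have one3 : (1 : TP3 k A) = 1 ⊗ₜ (1 ⊗ₜ 1) := rfl
  have one4 : (1 : TP4 k A) = 1 ⊗ₜ (1 ⊗ₜ (1 ⊗ₜ 1)) := rfl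
  have hcopR1 : copR Δ (1 : TP2 k A) = 1 := by
    rw [one2, hp_copR_tmul, map_one]; rfl
  have hcopL1 : copL Δ (1 : TP2 k A) = 1 := by
    rw [one2, hp_copL_tmul, map_one]; rfl
  have hemb1 : emb12 k A (1 : TP2 k A) = 1 := by
    rw [one2]; simp [emb12, lTen, one3]
  -- counit in the first slot
  have hε1 : hp_eps ce (TP2 k A) Φ = 1 := by
    have h := congrArg (hp_idt (hp_eps ce (TP2 k A))) hcoc
    rw [map_mul, map_mul, map_mul, hp_E2_1 Δ ce hcuR, hp_E2_2 Δ ce hcuL, hp_E2_3, hp_E2_p,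
      hΦcu, hcopR1, hemb1, one_mul, mul_one, hp_idt_tmul] at h
    have h2 := congrArg (fun t => Ring.inverse Φ * t) h
    simp only [← mul_assoc, hl, one_mul] at h2
    have h3 := congrArg (hp_eps ce (TP2 k A)) h2
    rw [hp_eps_tmul, map_one, map_one, one_smul] at h3
    exact h3.symm
  -- counit in the third slot
  have hε3 : hp_idt (hp_epsR ce) Φ = 1 := by
    have h := congrArg (hp_idt (hp_idt (hp_eps ce A))) hcoc
    rw [map_mul, map_mul, map_mul, hp_E3_1, hp_E3_2 Δ ce hcuR, hp_E3_3 Δ ce hcuL, hp_E3_p,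
      hp_E3_o, hΦcu, hcopL1, one_mul, ← Algebra.TensorProduct.one_def, mul_one] at h
    have h2 := congrArg (fun t => t * Ring.inverse Φ) h
    simp only [mul_assoc, hr, mul_one] at h2
    have h3 := congrArg (hp_idt (hp_epsR ce)) h2
    rw [map_one] at h3
    rw [h3]
    generalize hp_idt (hp_epsR ce) Φ = W
    induction W using TensorProduct.induction_on with
    | zero => simp
    | add x y hx hy => rw [map_add, map_add, ← hx, ← hy]
    | tmul x y => simp [emb12, lTen]
  have key : tmap3 S LinearMap.id S Φ
      = tmap3 LinearMap.id S LinearMap.id (Ring.inverse Φ) := by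
    have h1 : pad4 Φ * cop4_2 Δ Φ
        = cop4_1 Δ Φ * (cop4_3 Δ Φ * ((1:A) ⊗ₜ[k] Ring.inverse Φ)) := by
      rw [← hp_mul_assoc4, hcoc, hp_mul_assoc4, Algebra.TensorProduct.tmul_mul_tmul, hr, one_mul,
        ← Algebra.TensorProduct.one_def, hp_mul_one4]
    have h2 := congrArg (hp_m4 S) h1
    rw [hp_L1 Δ ce S hSm hSR, hp_L2 Δ ce S hSm hSL, hε1, hΦcu,
      ← Algebra.TensorProduct.one_def, ← Algebra.TensorProduct.one_def, hp_one_mul4,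
      hp_L3 Δ ce S hSm hSL, hε3] at h2
    simpa [one2, mulA, hS1] using h2
  refine ⟨key, fun a => ?_⟩
  rw [key]
  have h : Ring.inverse Φ * copL Δ (Δ a) = copR Δ (Δ a) * Ring.inverse Φ := by
    rw [hint a, ← mul_assoc, ← mul_assoc, hl, one_mul]
  have h2 := congrArg (tmap3 LinearMap.id S LinearMap.id) h
  rwa [hp_C1 Δ ce S hSm hSR, hp_C2 Δ ce S hSm hSL, hcuL, hcuR] at h2
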